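/- Assume good X, good Y and good Z. If (ys ≠ zs or y ≠ z) and fresh ys y Z, then substitution of different variables distributes over itself: X[Y/y]_ys[Z/z]_zs = (X[Z/z]_zs)[(Y[Z/z]_zs)/y]_ys. -/

import Mathlib

open scoped Classical

universe u

section Binding

variable (var varsort index bindex opsym : Type u)

/-! ### Inputs -/

/-- An `(α,β)`-input: a partial function from `α` to `β`. -/
abbrev Input (α β : Type u) : Type u := α → Option β

/-- The domain of an input. -/
def idom {α β : Type u} (inp : Input α β) : Set α := {a | inp a ≠ none}

/-- The componentwise lifting of a predicate to inputs. -/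
def liftP {α β : Type u} (P : β → Prop) (inp : Input α β) : Prop :=
  ∀ a b, inp a = some b → P b

/-- The componentwise lifting of a function to inputs. -/
def liftF {α β γ : Type u} (f : β → γ) (inp : Input α β) : Input α γ :=
  fun a => (inp a).map f

/-- An input is small if its domain has cardinality smaller than that of `var`. -/
def smallDom {α β : Type u} (inp : Input α β) : Prop :=
  Cardinal.mk (idom inp) < Cardinal.mk var

/-! ### Quasiterms -/

mutual
/-- Quasiterms: raw terms before quotienting by alpha-equivalence. -/
inductive QTerm : Type u where
  | qVar : varsort → var → QTerm
  | qOp : opsym → (index → Option QTerm) → (bindex → Option QAbs) → QTerm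
/-- Quasiabstractions. -/
inductive QAbs : Type u where
  | qAbs : varsort → var → QTerm → QAbs
end

/-- Transposition of two variables. -/
noncomputable def swapVar (z1 z2 x : var) : var :=
  if x = z1 then z2 else if x = z2 then z1 else x

/-- Sort-aware transposition of variables (acts only on variables of varsort `zs`). -/
noncomputable def swapVarS (zs xs : varsort) (z1 z2 x : var) : var :=
  if xs = zs then swapVar var z1 z2 x else x

variable {var varsort index bindex opsym}

/-- Swapping of the variables `z1`, `z2` at varsort `zs` in a quasiterm
(transposing them everywhere, including binding positions). -/
noncomputable def qSwap (z1 z2 : var) (zs : varsort) :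
    QTerm var varsort index bindex opsym → QTerm var varsort index bindex opsym :=
  QTerm.rec (motive_1 := fun _ => QTerm var varsort index bindex opsym)
    (motive_2 := fun _ => QAbs var varsort index bindex opsym)
    (motive_3 := fun _ => Option (QTerm var varsort index bindex opsym))
    (motive_4 := fun _ => Option (QAbs var varsort index bindex opsym))
    (fun xs x => .qVar xs (swapVarS var varsort zs xs z1 z2 x))
    (fun d _ _ rinp rbinp => .qOp d rinp rbinp)
    (fun xs x _ rX => .qAbs xs (swapVarS var varsort zs xs z1 z2 x) rX)
    none (fun _ r => some r) none (fun _ r => some r)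

/-- Swapping of variables in a quasiabstraction. -/
noncomputable def qSwapAbs (z1 z2 : var) (zs : varsort) :
    QAbs var varsort index bindex opsym → QAbs var varsort index bindex opsym
  | .qAbs xs x X => .qAbs xs (swapVarS var varsort zs xs z1 z2 x) (qSwap z1 z2 zs X)

/-! ### Freshness and goodness -/

mutual
/-- `QFresh ys y X`: the variable `y` of varsort `ys` has no free occurrence in `X`. -/
inductive QFresh : varsort → var → QTerm var varsort index bindex opsym → Prop where
  | qVar : ∀ {ys y xs x}, (ys, y) ≠ (xs, x) → QFresh ys y (.qVar xs x)
  | qOp : ∀ {ys y d inp binp}, (∀ i X, inp i = some X → QFresh ys y X) →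
      (∀ j A, binp j = some A → QFreshAbs ys y A) → QFresh ys y (.qOp d inp binp)
/-- Freshness for quasiabstractions. -/
inductive QFreshAbs : varsort → var → QAbs var varsort index bindex opsym → Prop where
  | qAbs_bound : ∀ {xs x X}, QFreshAbs xs x (.qAbs xs x X)
  | qAbs_body : ∀ {ys y xs x X}, QFresh ys y X → QFreshAbs ys y (.qAbs xs x X)
end

mutual
/-- Good quasiterms: all constructors branch less than `|var|`. -/
inductive QGood : QTerm var varsort index bindex opsym → Prop where
  | qVar : ∀ {xs x}, QGood (.qVar xs x)
  | qOp : ∀ {d inp binp}, (∀ i X, inp i = some X → QGood X) →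
      (∀ j A, binp j = some A → QGoodAbs A) →
      smallDom var inp → smallDom var binp → QGood (.qOp d inp binp)
/-- Good quasiabstractions. -/
inductive QGoodAbs : QAbs var varsort index bindex opsym → Prop where
  | qAbs : ∀ {xs x X}, QGood X → QGoodAbs (.qAbs xs x X)
end

/-! ### Alpha-equivalence -/

mutual
/-- Alpha-equivalence of quasiterms. -/
inductive Alpha : QTerm var varsort index bindex opsym →
    QTerm var varsort index bindex opsym → Prop where
  | qVar : ∀ {xs x}, Alpha (.qVar xs x) (.qVar xs x)
  | qOp : ∀ {d inp binp inp' binp'},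
      (∀ i, inp i = none ↔ inp' i = none) →
      (∀ i X X', inp i = some X → inp' i = some X' → Alpha X X') →
      (∀ j, binp j = none ↔ binp' j = none) →
      (∀ j A A', binp j = some A → binp' j = some A' → AlphaAbs A A') →
      Alpha (.qOp d inp binp) (.qOp d inp' binp')
/-- Alpha-equivalence of quasiabstractions (the exists-fresh formulation). -/
inductive AlphaAbs : QAbs var varsort index bindex opsym →
    QAbs var varsort index bindex opsym → Prop where
  | qAbs : ∀ {xs x x' X X' y}, y ∉ ({x, x'} : Set var) →
      QFresh xs y X → QFresh xs y X' →
      Alpha (qSwap y x xs X) (qSwap y x' xs X') →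
      AlphaAbs (.qAbs xs x X) (.qAbs xs x' X')
end

/-! ### Terms and abstractions as quotients -/

variable (var varsort index bindex opsym)

/-- Terms: quasiterms modulo alpha-equivalence. -/
def Term : Type u := Quot (@Alpha var varsort index bindex opsym)

/-- Abstractions: quasiabstractions modulo alpha-equivalence. -/
def Abstr : Type u := Quot (@AlphaAbs var varsort index bindex opsym)

variable {var varsort index bindex opsym}

/-- The projection from quasiterms to terms. -/
def tmk : QTerm var varsort index bindex opsym → Term var varsort index bindex opsym :=
  Quot.mk _

/-- The projection from quasiabstractions to abstractions. -/
def amk : QAbs var varsort index bindex opsym → Abstr var varsort index bindex opsym :=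
  Quot.mk _

/-- A representative of a term. -/
noncomputable def trep (X : Term var varsort index bindex opsym) :
    QTerm var varsort index bindex opsym := Quot.out X

/-- A representative of an abstraction. -/
noncomputable def arep (A : Abstr var varsort index bindex opsym) :
    QAbs var varsort index bindex opsym := Quot.out A

/-- Good terms. -/
def good (X : Term var varsort index bindex opsym) : Prop := QGood (trep X)

/-- Good abstractions. -/
def goodAbs (A : Abstr var varsort index bindex opsym) : Prop := QGoodAbs (arep A)

/-- The variable-injection constructor on terms. -/
def Var (xs : varsort) (x : var) : Term var varsort index bindex opsym :=
  tmk (.qVar xs x)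

/-- The operation constructor on terms. -/
noncomputable def Op (d : opsym) (inp : Input index (Term var varsort index bindex opsym))
    (binp : Input bindex (Abstr var varsort index bindex opsym)) :
    Term var varsort index bindex opsym :=
  tmk (.qOp d (liftF trep inp) (liftF arep binp))

/-- The abstraction constructor. -/
noncomputable def Abs (xs : varsort) (x : var) (X : Term var varsort index bindex opsym) :
    Abstr var varsort index bindex opsym :=
  amk (.qAbs xs x (trep X))

/-- Freshness on terms. -/
def fresh (ys : varsort) (y : var) (X : Term var varsort index bindex opsym) : Prop :=
  QFresh ys y (trep X)

/-- Freshness on abstractions. -/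
def freshAbs (ys : varsort) (y : var) (A : Abstr var varsort index bindex opsym) : Prop :=
  QFreshAbs ys y (arep A)

/-- Swapping on terms. -/
noncomputable def tswap (X : Term var varsort index bindex opsym)
    (z1 z2 : var) (zs : varsort) : Term var varsort index bindex opsym :=
  tmk (qSwap z1 z2 zs (trep X))

/-! ### Substitution -/

mutual
/-- The graph of capture-avoiding substitution on quasiterms:
`QSubst X Y y ys Z` means that `Z` is a result of substituting `Y` for the free
occurrences of the variable `y` of varsort `ys` in `X` (along a capture-free
representative). -/
inductive QSubst : QTerm var varsort index bindex opsym →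
    QTerm var varsort index bindex opsym → var → varsort →
    QTerm var varsort index bindex opsym → Prop where
  | var_eq : ∀ {Y y ys}, QSubst (.qVar ys y) Y y ys Y
  | var_ne : ∀ {Y y ys xs x}, (xs, x) ≠ (ys, y) → QSubst (.qVar xs x) Y y ys (.qVar xs x)
  | op : ∀ {Y y ys d inp binp inp' binp'},
      (∀ i, inp i = none ↔ inp' i = none) →
      (∀ i X X', inp i = some X → inp' i = some X' → QSubst X Y y ys X') →
      (∀ j, binp j = none ↔ binp' j = none) →
      (∀ j A A', binp j = some A → binp' j = some A' → QSubstAbs A Y y ys A') →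
      QSubst (.qOp d inp binp) Y y ys (.qOp d inp' binp')
/-- The graph of capture-avoiding substitution on quasiabstractions. -/
inductive QSubstAbs : QAbs var varsort index bindex opsym →
    QTerm var varsort index bindex opsym → var → varsort →
    QAbs var varsort index bindex opsym → Prop where
  | abs : ∀ {Y y ys xs x X X'}, (xs, x) ≠ (ys, y) → QFresh xs x Y →
      QSubst X Y y ys X' → QSubstAbs (.qAbs xs x X) Y y ys (.qAbs xs x X')
end

/-- The graph of capture-avoiding substitution on terms. -/
def SubstRel (X Y : Term var varsort index bindex opsym) (y : var) (ys : varsort)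
    (Z : Term var varsort index bindex opsym) : Prop :=
  ∃ qX qZ, tmk qX = X ∧ tmk qZ = Z ∧ QSubst qX (trep Y) y ys qZ

/-- Capture-avoiding substitution on terms: `subst X Y y ys` is `X[Y/y]_ys`. -/
noncomputable def subst (X Y : Term var varsort index bindex opsym)
    (y : var) (ys : varsort) : Term var varsort index bindex opsym :=
  if h : ∃ Z, SubstRel X Y y ys Z then h.choose else X

/-- The graph of capture-avoiding substitution on abstractions. -/
def SubstAbsRel (A : Abstr var varsort index bindex opsym)
    (Y : Term var varsort index bindex opsym) (y : var) (ys : varsort)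
    (B : Abstr var varsort index bindex opsym) : Prop :=
  ∃ qA qB, amk qA = A ∧ amk qB = B ∧ QSubstAbs qA (trep Y) y ys qB

/-- Capture-avoiding substitution on abstractions: `substAbs A Y y ys` is `A[Y/y]_ys`. -/
noncomputable def substAbs (A : Abstr var varsort index bindex opsym)
    (Y : Term var varsort index bindex opsym) (y : var) (ys : varsort) :
    Abstr var varsort index bindex opsym :=
  if h : ∃ B, SubstAbsRel A Y y ys B then h.choose else A

/-! ### Parallel substitution -/

mutual
/-- The graph of capture-avoiding parallel substitution on quasiterms, along an
assignment `ρ : varsort → var → Option qterm`. -/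
inductive QPSubst : QTerm var varsort index bindex opsym →
    (varsort → var → Option (QTerm var varsort index bindex opsym)) →
    QTerm var varsort index bindex opsym → Prop where
  | var_some : ∀ {ρ xs x Y}, ρ xs x = some Y → QPSubst (.qVar xs x) ρ Y
  | var_none : ∀ {ρ xs x}, ρ xs x = none → QPSubst (.qVar xs x) ρ (.qVar xs x)
  | op : ∀ {ρ d inp binp inp' binp'},
      (∀ i, inp i = none ↔ inp' i = none) →
      (∀ i X X', inp i = some X → inp' i = some X' → QPSubst X ρ X') →
      (∀ j, binp j = none ↔ binp' j = none) →
      (∀ j A A', binp j = some A → binp' j = some A' → QPSubstAbs A ρ A') →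
      QPSubst (.qOp d inp binp) ρ (.qOp d inp' binp')
/-- The graph of capture-avoiding parallel substitution on quasiabstractions. -/
inductive QPSubstAbs : QAbs var varsort index bindex opsym →
    (varsort → var → Option (QTerm var varsort index bindex opsym)) →
    QAbs var varsort index bindex opsym → Prop where
  | abs : ∀ {ρ xs x X X'}, ρ xs x = none →
      (∀ ys y Y, ρ ys y = some Y → QFresh xs x Y) →
      QPSubst X ρ X' → QPSubstAbs (.qAbs xs x X) ρ (.qAbs xs x X')
end

/-- Turning a term-valued assignment into a quasiterm-valued one, by picking
representatives. -/
noncomputable def qassign (ρ : varsort → var → Option (Term var varsort index bindex opsym)) :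
    varsort → var → Option (QTerm var varsort index bindex opsym) :=
  fun xs x => (ρ xs x).map trep

/-- The graph of parallel substitution on terms. -/
def PSubstRel (X : Term var varsort index bindex opsym)
    (ρ : varsort → var → Option (Term var varsort index bindex opsym))
    (Z : Term var varsort index bindex opsym) : Prop :=
  ∃ qX qZ, tmk qX = X ∧ tmk qZ = Z ∧ QPSubst qX (qassign ρ) qZ

/-- Capture-avoiding parallel substitution on terms: `psubst X ρ` is `X[ρ]`. -/
noncomputable def psubst (X : Term var varsort index bindex opsym)
    (ρ : varsort → var → Option (Term var varsort index bindex opsym)) :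
    Term var varsort index bindex opsym :=
  if h : ∃ Z, PSubstRel X ρ Z then h.choose else X

/-- The graph of parallel substitution on abstractions. -/
def PSubstAbsRel (A : Abstr var varsort index bindex opsym)
    (ρ : varsort → var → Option (Term var varsort index bindex opsym))
    (B : Abstr var varsort index bindex opsym) : Prop :=
  ∃ qA qB, amk qA = A ∧ amk qB = B ∧ QPSubstAbs qA (qassign ρ) qB

/-- Capture-avoiding parallel substitution on abstractions. -/
noncomputable def psubstAbs (A : Abstr var varsort index bindex opsym)
    (ρ : varsort → var → Option (Term var varsort index bindex opsym)) :
    Abstr var varsort index bindex opsym :=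
  if h : ∃ B, PSubstAbsRel A ρ B then h.choose else A

/-! ### Locally nameless images -/

/-- Locally nameless trees; `bot` marks an undefined argument. -/
inductive DT (var varsort index bindex opsym : Type u) : Type u where
  | bot : DT var varsort index bindex opsym
  | v : (ℕ ⊕ (varsort × var)) → DT var varsort index bindex opsym
  | abs : varsort → DT var varsort index bindex opsym → DT var varsort index bindex opsym
  | op : opsym → (index → DT var varsort index bindex opsym) →
      (bindex → DT var varsort index bindex opsym) → DT var varsort index bindex opsym

/-- Environment extension by a binder. -/
noncomputable def extE (ρ : varsort → var → ℕ ⊕ (varsort × var)) (xs : varsort) (x : var) :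
    varsort → var → ℕ ⊕ (varsort × var) :=
  fun ys y => if ys = xs ∧ y = x then Sum.inl 0 else Sum.map Nat.succ id (ρ ys y)

/-- Translation to locally nameless trees. -/
noncomputable def transQ : QTerm var varsort index bindex opsym →
    (varsort → var → ℕ ⊕ (varsort × var)) → DT var varsort index bindex opsym :=
  QTerm.rec (motive_1 := fun _ => (varsort → var → ℕ ⊕ (varsort × var)) → DT var varsort index bindex opsym)
    (motive_2 := fun _ => (varsort → var → ℕ ⊕ (varsort × var)) → DT var varsort index bindex opsym)
    (motive_3 := fun _ => (varsort → var → ℕ ⊕ (varsort × var)) → DT var varsort index bindex opsym)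
    (motive_4 := fun _ => (varsort → var → ℕ ⊕ (varsort × var)) → DT var varsort index bindex opsym)
    (fun xs x ρ => .v (ρ xs x))
    (fun d _ _ r s ρ => .op d (fun i => r i ρ) (fun j => s j ρ))
    (fun xs x _ r ρ => .abs xs (r (extE ρ xs x)))
    (fun _ => .bot) (fun _ r => r) (fun _ => .bot) (fun _ r => r)

/-- Translation of abstractions. -/
noncomputable def transA (A : QAbs var varsort index bindex opsym)
    (ρ : varsort → var → ℕ ⊕ (varsort × var)) : DT var varsort index bindex opsym :=
  match A with
  | .qAbs xs x X => .abs xs (transQ X (extE ρ xs x))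

/-- Translation of optional arguments. -/
def optD {α : Type u} (f : α → DT var varsort index bindex opsym) :
    Option α → DT var varsort index bindex opsym
  | none => .bot
  | some a => f a

theorem trans_var (xs : varsort) (x : var) (ρ) :
    transQ (.qVar xs x : QTerm var varsort index bindex opsym) ρ = .v (ρ xs x) := rfl

theorem trans_op (d : opsym) (inp : index → Option (QTerm var varsort index bindex opsym))
    (binp : bindex → Option (QAbs var varsort index bindex opsym)) (ρ) :
    transQ (.qOp d inp binp) ρ = .op d (fun i => optD (fun X => transQ X ρ) (inp i))
      (fun j => optD (fun A => transA A ρ) (binp j)) := by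
  show DT.op d _ _ = _
  congr 1
  · funext i
    beta_reduce
    generalize inp i = o
    cases o <;> rfl
  · funext i
    beta_reduce
    generalize binp i = o
    rcases o with _ | ⟨xs, x, X⟩ <;> rfl

theorem qSwap_var (z1 z2 : var) (zs xs : varsort) (x : var) :
    qSwap z1 z2 zs (.qVar xs x : QTerm var varsort index bindex opsym)
      = .qVar xs (swapVarS var varsort zs xs z1 z2 x) := rfl

theorem qSwap_op (z1 z2 : var) (zs : varsort) (d : opsym)
    (inp : index → Option (QTerm var varsort index bindex opsym))
    (binp : bindex → Option (QAbs var varsort index bindex opsym)) :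
    qSwap z1 z2 zs (.qOp d inp binp) = .qOp d (fun i => (inp i).map (qSwap z1 z2 zs))
      (fun j => (binp j).map (qSwapAbs z1 z2 zs)) := by
  show QTerm.qOp d _ _ = _
  congr 1
  · funext i
    beta_reduce
    generalize inp i = o
    cases o <;> rfl
  · funext i
    beta_reduce
    generalize binp i = o
    rcases o with _ | ⟨xs, x, X⟩ <;> rfl

theorem q_ind {P : QTerm var varsort index bindex opsym → Prop}
    {Q : QAbs var varsort index bindex opsym → Prop}
    (hv : ∀ xs x, P (.qVar xs x))
    (ho : ∀ d inp binp, (∀ i X, inp i = some X → P X) → (∀ j A, binp j = some A → Q A) →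
      P (.qOp d inp binp))
    (ha : ∀ xs x X, P X → Q (.qAbs xs x X)) (X) : P X := by
  refine QTerm.rec (motive_1 := P) (motive_2 := Q) (motive_3 := fun o => ∀ X, o = some X → P X)
    (motive_4 := fun o => ∀ X, o = some X → Q X) hv ?_ ha ?_ ?_ ?_ ?_ X
  · intro d inp binp h1 h2
    exact ho d inp binp h1 h2
  · intro X h; cases h
  · intro X h X' h'; cases h'; exact h
  · intro X h; cases h
  · intro X h X' h'; cases h'; exact h

theorem not_fresh_op_inp {ys : varsort} {y : var} {d : opsym}
    {inp : index → Option (QTerm var varsort index bindex opsym)}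
    {binp : bindex → Option (QAbs var varsort index bindex opsym)} {i X} (h : inp i = some X)
    (hf : ¬ QFresh ys y X) : ¬ QFresh ys y (.qOp d inp binp) := by
  intro h'
  cases h' with
  | qOp h1 h2 => exact hf (h1 i X h)

theorem not_fresh_op_binp {ys : varsort} {y : var} {d : opsym}
    {inp : index → Option (QTerm var varsort index bindex opsym)}
    {binp : bindex → Option (QAbs var varsort index bindex opsym)} {i X} (h : binp i = some X)
    (hf : ¬ QFreshAbs ys y X) : ¬ QFresh ys y (.qOp d inp binp) := by
  intro h'
  cases h' with
  | qOp h1 h2 => exact hf (h2 i X h)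

theorem not_fresh_abs {ys xs : varsort} {y x : var}
    {X : QTerm var varsort index bindex opsym} (h : ¬ (ys = xs ∧ y = x))
    (hf : ¬ QFresh ys y X) : ¬ QFreshAbs ys y (.qAbs xs x X) := by
  intro h'
  cases h' with
  | qAbs_bound => exact h ⟨rfl, rfl⟩
  | qAbs_body h1 => exact hf h1

theorem not_fresh_var {xs : varsort} {x : var} :
    ¬ QFresh xs x (.qVar xs x : QTerm var varsort index bindex opsym) := by
  intro h'
  cases h' with
  | qVar h1 => exact h1 rfl

/-- Translations agree when the environments agree on free variables. -/
theorem trans_agree (X : QTerm var varsort index bindex opsym) :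
    ∀ ρ ρ', (∀ ws w, ¬ QFresh ws w X → ρ' ws w = ρ ws w) → transQ X ρ' = transQ X ρ := by
  refine q_ind (P := fun X => ∀ ρ ρ', (∀ ws w, ¬ QFresh ws w X → ρ' ws w = ρ ws w) →
      transQ X ρ' = transQ X ρ)
    (Q := fun X => ∀ ρ ρ', (∀ ws w, ¬ QFreshAbs ws w X → ρ' ws w = ρ ws w) →
      transA X ρ' = transA X ρ) ?_ ?_ ?_ X
  · intro xs x ρ ρ' h
    rw [trans_var, trans_var, h _ _ not_fresh_var]
  · intro d inp binp h1 h2 ρ ρ' h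
    rw [trans_op, trans_op]
    congr 1
    · funext i
      rcases hi : inp i with _ | Y
      · rfl
      · exact h1 i Y hi _ _ fun ws w hw => h ws w (not_fresh_op_inp hi hw)
    · funext i
      rcases hi : binp i with _ | Y
      · rfl
      · exact h2 i Y hi _ _ fun ws w hw => h ws w (not_fresh_op_binp hi hw)
  · intro xs x X ih ρ ρ' h
    show DT.abs _ _ = DT.abs _ _
    congr 1
    apply ih
    intro ws w hw
    unfold extE
    split_ifs with hc
    · rfl
    · rw [h ws w (not_fresh_abs hc hw)]

theorem swapVarS_inj {zs ws : varsort} {z1 z2 a b : var}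
    (h : swapVarS var varsort zs ws z1 z2 a = swapVarS var varsort zs ws z1 z2 b) : a = b := by
  unfold swapVarS swapVar at h
  split_ifs at h <;> grind

theorem trans_swap (z1 z2 : var) (zs : varsort) (X : QTerm var varsort index bindex opsym) :
    ∀ ρ ρ', (∀ ws w, ¬ QFresh ws w X →
        ρ' ws (swapVarS var varsort zs ws z1 z2 w) = ρ ws w) →
      transQ (qSwap z1 z2 zs X) ρ' = transQ X ρ := by
  refine q_ind (P := fun X => ∀ ρ ρ', (∀ ws w, ¬ QFresh ws w X →
        ρ' ws (swapVarS var varsort zs ws z1 z2 w) = ρ ws w) →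
      transQ (qSwap z1 z2 zs X) ρ' = transQ X ρ)
    (Q := fun X => ∀ ρ ρ', (∀ ws w, ¬ QFreshAbs ws w X →
        ρ' ws (swapVarS var varsort zs ws z1 z2 w) = ρ ws w) →
      transA (qSwapAbs z1 z2 zs X) ρ' = transA X ρ) ?_ ?_ ?_ X
  · intro xs x ρ ρ' h
    rw [qSwap_var, trans_var, trans_var, h _ _ not_fresh_var]
  · intro d inp binp h1 h2 ρ ρ' h
    rw [qSwap_op, trans_op, trans_op]
    congr 1
    · funext i
      rcases hi : inp i with _ | Y
      · rfl
      · exact h1 i Y hi _ _ fun ws w hw => h ws w (not_fresh_op_inp hi hw)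
    · funext i
      rcases hi : binp i with _ | Y
      · rfl
      · exact h2 i Y hi _ _ fun ws w hw => h ws w (not_fresh_op_binp hi hw)
  · intro xs x X ih ρ ρ' h
    show DT.abs _ _ = DT.abs _ _
    congr 1
    apply ih
    intro ws w hw
    unfold extE
    by_cases hc : ws = xs ∧ w = x
    · obtain ⟨rfl, rfl⟩ := hc
      simp
    · rw [if_neg hc, if_neg, h ws w (not_fresh_abs hc hw)]
      rintro ⟨rfl, h2⟩
      exact hc ⟨rfl, swapVarS_inj h2⟩

theorem trans_swap_fresh {X : QTerm var varsort index bindex opsym} {xs : varsort} {y : var}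
    (x : var) (h : QFresh xs y X) (ρ) :
    transQ (qSwap y x xs X) (extE ρ xs y) = transQ X (extE ρ xs x) := by
  apply trans_swap
  intro ws w hw
  unfold extE swapVarS swapVar
  by_cases h1 : ws = xs
  · subst h1
    have : w ≠ y := by
      rintro rfl
      exact hw h
    grind
  · simp [h1]

/-- Alpha-equivalent quasiterms have the same translation. -/
theorem alpha_trans {X X' : QTerm var varsort index bindex opsym} (h : Alpha X X') :
    ∀ ρ, transQ X ρ = transQ X' ρ := by
  refine Alpha.rec (motive_1 := fun X X' _ => ∀ ρ, transQ X ρ = transQ X' ρ)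
    (motive_2 := fun X X' _ => ∀ ρ, transA X ρ = transA X' ρ) ?_ ?_ ?_ h
  · intros; rfl
  · intro d inp binp inp' binp' h1 h2 h3 h4 h5 h6 ρ
    rw [trans_op, trans_op]
    congr 1
    · funext i
      rcases hi : inp i with _ | Y
      · rw [(h1 i).1 hi]
      · rcases hi' : inp' i with _ | Y'
        · rw [(h1 i).2 hi'] at hi; cases hi
        · exact h5 i Y Y' hi hi' ρ
    · funext i
      rcases hi : binp i with _ | Y
      · rw [(h3 i).1 hi]
      · rcases hi' : binp' i with _ | Y'
        · rw [(h3 i).2 hi'] at hi; cases hi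
        · exact h6 i Y Y' hi hi' ρ
  · intro xs x x' X X' y hy h1 h2 h3 ih ρ
    show DT.abs _ _ = DT.abs _ _
    rw [← trans_swap_fresh x h1, ← trans_swap_fresh x' h2, ih]

def DGood : DT var varsort index bindex opsym → Prop
  | .bot => True
  | .v _ => True
  | .abs _ D => DGood D
  | .op _ f g => (∀ i, DGood (f i)) ∧ (∀ j, DGood (g j)) ∧
      Cardinal.mk {i | f i ≠ .bot} < Cardinal.mk var ∧
      Cardinal.mk {j | g j ≠ .bot} < Cardinal.mk var

theorem trans_ne_bot (X : QTerm var varsort index bindex opsym) (ρ) : transQ X ρ ≠ .bot := by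
  cases X with
  | qVar => rw [trans_var]; simp
  | qOp => rw [trans_op]; simp

theorem transA_ne_bot (X : QAbs var varsort index bindex opsym) (ρ) : transA X ρ ≠ .bot := by
  cases X with
  | qAbs => unfold transA; simp

theorem good_iff (X : QTerm var varsort index bindex opsym) :
    ∀ ρ, DGood (transQ X ρ) ↔ QGood X := by
  refine q_ind (P := fun X => ∀ ρ, DGood (transQ X ρ) ↔ QGood X)
    (Q := fun X => ∀ ρ, DGood (transA X ρ) ↔ QGoodAbs X) ?_ ?_ ?_ X
  · intro xs x ρ
    exact ⟨fun _ => .qVar, fun _ => trivial⟩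
  · intro d inp binp h1 h2 ρ
    have e1 : {i | optD (fun X => transQ X ρ) (inp i) ≠ .bot} = idom inp := by
      ext i
      show _ ≠ _ ↔ _ ≠ _
      rcases inp i with _ | Y
      · simp [optD]
      · simpa [optD] using trans_ne_bot Y ρ
    have e2 : {i | optD (fun X => transA X ρ) (binp i) ≠ .bot} = idom binp := by
      ext i
      show _ ≠ _ ↔ _ ≠ _
      rcases binp i with _ | Y
      · simp [optD]
      · simpa [optD] using transA_ne_bot Y ρ
    rw [trans_op]
    unfold DGood
    rw [e1, e2]
    constructor
    · rintro ⟨a, b, c, e⟩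
      refine .qOp ?_ ?_ c e
      · intro i X hi
        have := a i
        beta_reduce at this
        rw [hi] at this
        exact (h1 i X hi ρ).1 this
      · intro i X hi
        have := b i
        beta_reduce at this
        rw [hi] at this
        exact (h2 i X hi ρ).1 this
    · intro h
      cases h with
      | qOp a b c e =>
        refine ⟨fun i => ?_, fun i => ?_, c, e⟩
        · beta_reduce
          rcases hi : inp i with _ | Y
          · trivial
          · exact (h1 i Y hi ρ).2 (a i Y hi)
        · beta_reduce
          rcases hi : binp i with _ | Y
          · trivial
          · exact (h2 i Y hi ρ).2 (b i Y hi)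
  · intro xs x X ih ρ
    show DGood (transQ X _) ↔ _
    rw [ih]
    constructor
    · exact fun h => .qAbs h
    · intro h
      cases h with
      | qAbs h => exact h

theorem fv_small (hreg : (Cardinal.mk var).IsRegular) (xs : varsort)
    (X : QTerm var varsort index bindex opsym) :
    QGood X → Cardinal.mk {v | ¬ QFresh xs v X} < Cardinal.mk var := by
  refine q_ind (P := fun X => QGood X → Cardinal.mk {v | ¬ QFresh xs v X} < Cardinal.mk var)
    (Q := fun X => QGoodAbs X → Cardinal.mk {v | ¬ QFreshAbs xs v X} < Cardinal.mk var)
    ?_ ?_ ?_ X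
  · intro ys y _
    refine lt_of_le_of_lt (Cardinal.mk_le_mk_of_subset (t := {y}) ?_) ?_
    · intro v hv
      by_contra h
      apply hv
      refine .qVar ?_
      intro h'
      exact h (Prod.ext_iff.1 h').2
    · rw [Cardinal.mk_singleton]
      exact lt_of_lt_of_le Cardinal.one_lt_aleph0 hreg.aleph0_le
  · intro d inp binp h1 h2 h
    cases h with
    | qOp a b c e =>
    have key : {v | ¬ QFresh xs v (.qOp d inp binp)} ⊆
        (⋃ i ∈ idom inp, {v | ∃ X, inp i = some X ∧ ¬ QFresh xs v X}) ∪
        (⋃ i ∈ idom binp, {v | ∃ X, binp i = some X ∧ ¬ QFreshAbs xs v X}) := by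
      intro v hv
      by_contra hn
      apply hv
      rw [Set.mem_union, not_or] at hn
      refine .qOp ?_ ?_
      · intro i X hi
        by_contra hc
        apply hn.1
        simp only [Set.mem_iUnion]
        exact ⟨i, by simp [idom, hi], X, hi, hc⟩
      · intro i X hi
        by_contra hc
        apply hn.2
        simp only [Set.mem_iUnion]
        exact ⟨i, by simp [idom, hi], X, hi, hc⟩
    refine lt_of_le_of_lt (Cardinal.mk_le_mk_of_subset key) ?_
    refine lt_of_le_of_lt (Cardinal.mk_union_le _ _) ?_
    refine Cardinal.add_lt_of_lt hreg.aleph0_le ?_ ?_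
    · rw [Cardinal.card_biUnion_lt_iff_forall_of_isRegular hreg c]
      intro i hi
      rcases hX : inp i with _ | Y
      · exact absurd hX hi
      · refine lt_of_le_of_lt (Cardinal.mk_le_mk_of_subset ?_) (h1 i Y hX (a i Y hX))
        rintro v ⟨_, ⟨⟩, h⟩
        exact h
    · rw [Cardinal.card_biUnion_lt_iff_forall_of_isRegular hreg e]
      intro i hi
      rcases hX : binp i with _ | Y
      · exact absurd hX hi
      · refine lt_of_le_of_lt (Cardinal.mk_le_mk_of_subset ?_) (h2 i Y hX (b i Y hX))
        rintro v ⟨_, ⟨⟩, h⟩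
        exact h
  · intro ys y X ih h
    cases h with
    | qAbs h =>
    refine lt_of_le_of_lt (Cardinal.mk_le_mk_of_subset ?_) (ih h)
    intro v hv hf
    exact hv (.qAbs_body hf)

theorem exists_fresh2 (hreg : (Cardinal.mk var).IsRegular) (xs : varsort)
    {X Y : QTerm var varsort index bindex opsym} (hX : QGood X) (hY : QGood Y) (a b : var) :
    ∃ v, v ≠ a ∧ v ≠ b ∧ QFresh xs v X ∧ QFresh xs v Y := by
  by_contra hcon
  push Not at hcon
  have hle : Cardinal.mk (Set.univ : Set var) ≤ Cardinal.mk
      (({a, b} ∪ ({v | ¬ QFresh xs v X} ∪ {v | ¬ QFresh xs v Y}) : Set var)) := by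
    apply Cardinal.mk_le_mk_of_subset
    intro v _
    by_contra hn
    simp only [Set.mem_union, Set.mem_insert_iff, Set.mem_singleton_iff, Set.mem_ofPred_eq,
      not_or, not_not] at hn
    exact hcon v hn.1.1 hn.1.2 hn.2.1 hn.2.2
  rw [Cardinal.mk_univ] at hle
  refine absurd hle (not_le.2 ?_)
  refine lt_of_le_of_lt (Cardinal.mk_union_le _ _) (Cardinal.add_lt_of_lt hreg.aleph0_le ?_ ?_)
  · exact lt_of_lt_of_le (Cardinal.lt_aleph0_of_finite _) hreg.aleph0_le
  · exact lt_of_le_of_lt (Cardinal.mk_union_le _ _)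
      (Cardinal.add_lt_of_lt hreg.aleph0_le (fv_small hreg xs X hX) (fv_small hreg xs Y hY))

/-- Injectivity of environments. -/
def EInj (ρ : varsort → var → ℕ ⊕ (varsort × var)) : Prop :=
  ∀ xs x ys y, ρ xs x = ρ ys y → xs = ys ∧ x = y

theorem EInj_ext {ρ : varsort → var → ℕ ⊕ (varsort × var)} (h : EInj ρ) (zs : varsort) (z : var) :
    EInj (extE ρ zs z) := by
  intro xs x ys y he
  have hinj : Function.Injective (Sum.map Nat.succ (id : varsort × var → _)) :=
    Function.Injective.sumMap Nat.succ_injective Function.injective_id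
  have hz : ∀ s : ℕ ⊕ (varsort × var), Sum.map Nat.succ id s ≠ Sum.inl 0 := by
    rintro (n | p) <;> simp
  unfold extE at he
  split_ifs at he with h1 h2 h2
  · exact ⟨h1.1.trans h2.1.symm, h1.2.trans h2.2.symm⟩
  · exact absurd he.symm (hz _)
  · exact absurd he (hz _)
  · exact h _ _ _ _ (hinj he)

theorem complete (hreg : (Cardinal.mk var).IsRegular) (D : DT var varsort index bindex opsym) :
    (∀ X X' ρ, EInj ρ → QGood X → QGood X' → transQ X ρ = D → transQ X' ρ = D → Alpha X X') ∧
    (∀ X X' ρ, EInj ρ → QGoodAbs X → QGoodAbs X' → transA X ρ = D → transA X' ρ = D →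
      AlphaAbs X X') := by
  induction D with
  | bot =>
    exact ⟨fun X _ _ _ _ _ h => absurd h (trans_ne_bot _ _),
      fun X _ _ _ _ _ h => absurd h (transA_ne_bot _ _)⟩
  | v s =>
    constructor
    · rintro (⟨xs, x⟩ | ⟨d, inp, binp⟩) (⟨xs', x'⟩ | ⟨d', inp', binp'⟩) ρ hρ - - h h'
      · rw [trans_var] at h h'
        obtain ⟨rfl, rfl⟩ := hρ _ _ _ _ ((DT.v.inj h).trans (DT.v.inj h').symm)
        exact .qVar
      · rw [trans_op] at h'; cases h'
      · rw [trans_op] at h; cases h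
      · rw [trans_op] at h; cases h
    · rintro ⟨xs, x, X⟩ X' ρ hρ - - h
      cases h
  | abs zs D ih =>
    constructor
    · rintro (⟨xs, x⟩ | ⟨d, inp, binp⟩) X' ρ hρ - - h
      · cases h
      · rw [trans_op] at h; cases h
    · rintro ⟨xs, x, X⟩ ⟨xs', x', X'⟩ ρ hρ hg hg' h h'
      obtain ⟨rfl, k⟩ := DT.abs.inj h
      obtain ⟨rfl, k'⟩ := DT.abs.inj h'
      cases hg with
      | qAbs hg =>
      cases hg' with
      | qAbs hg' =>
      obtain ⟨v, h1, h2, h3, h4⟩ := exists_fresh2 hreg xs' hg hg' x x'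
      rw [← trans_swap_fresh x h3] at k
      rw [← trans_swap_fresh x' h4] at k'
      refine .qAbs (y := v) (by simp [h1, h2]) h3 h4 ?_
      refine ih.1 _ _ _ (EInj_ext hρ xs' v) ?_ ?_ k k'
      · rw [← good_iff _ (extE ρ xs' v), trans_swap_fresh x h3, good_iff]; exact hg
      · rw [← good_iff _ (extE ρ xs' v), trans_swap_fresh x' h4, good_iff]; exact hg'
  | op e f g ihf ihg =>
    constructor
    · rintro (⟨xs, x⟩ | ⟨d, inp, binp⟩) (⟨xs', x'⟩ | ⟨d', inp', binp'⟩) ρ hρ hg hg' h h'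
      · cases h
      · cases h
      · cases h'
      · rw [trans_op] at h h'
        obtain ⟨rfl, h1, h2⟩ := DT.op.inj h
        obtain ⟨rfl, h1', h2'⟩ := DT.op.inj h'
        cases hg with
        | qOp a b _ _ =>
        cases hg' with
        | qOp a' b' _ _ =>
        refine .qOp ?_ ?_ ?_ ?_
        · intro i
          have e1 := congrFun h1 i
          have e2 := congrFun h1' i
          beta_reduce at e1 e2
          rw [← e2] at e1
          revert e1
          rcases inp i with _ | Y <;> rcases inp' i with _ | Y' <;> intro e1
          · simp
          · exact absurd e1.symm (trans_ne_bot _ _)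
          · exact absurd e1 (trans_ne_bot _ _)
          · simp
        · intro i X X' hi hi'
          have e1 := congrFun h1 i
          have e2 := congrFun h1' i
          beta_reduce at e1 e2
          rw [hi] at e1
          rw [hi'] at e2
          exact (ihf i).1 X X' ρ hρ (a i X hi) (a' i X' hi') e1 e2
        · intro i
          have e1 := congrFun h2 i
          have e2 := congrFun h2' i
          beta_reduce at e1 e2
          rw [← e2] at e1
          revert e1
          rcases binp i with _ | Y <;> rcases binp' i with _ | Y' <;> intro e1
          · simp
          · exact absurd e1.symm (transA_ne_bot _ _)
          · exact absurd e1 (transA_ne_bot _ _)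
          · simp
        · intro i X X' hi hi'
          have e1 := congrFun h2 i
          have e2 := congrFun h2' i
          beta_reduce at e1 e2
          rw [hi] at e1
          rw [hi'] at e2
          exact (ihg i).2 X X' ρ hρ (b i X hi) (b' i X' hi') e1 e2
    · rintro ⟨xs, x, X⟩ X' ρ hρ - - h
      cases h

/-- Substitution on trees. -/
noncomputable def dsubst (E : DT var varsort index bindex opsym) (y : var) (ys : varsort) :
    DT var varsort index bindex opsym → DT var varsort index bindex opsym
  | .bot => .bot
  | .v s => if s = Sum.inr (ys, y) then E else .v s
  | .abs xs D => .abs xs (dsubst E y ys D)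
  | .op d f g => .op d (fun i => dsubst E y ys (f i)) (fun j => dsubst E y ys (g j))

theorem qsubst_trans {X Y X' : QTerm var varsort index bindex opsym} {y : var} {ys : varsort}
    (h : QSubst X Y y ys X') : ∀ ρ, EInj ρ → ρ ys y = Sum.inr (ys, y) →
      (∀ ws w, ¬ QFresh ws w Y → ρ ws w = Sum.inr (ws, w)) →
      transQ X' ρ = dsubst (transQ Y (fun ws w => Sum.inr (ws, w))) y ys (transQ X ρ) := by
  refine QSubst.rec (motive_1 := fun X Y y ys X' _ => ∀ ρ, EInj ρ → ρ ys y = Sum.inr (ys, y) →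
      (∀ ws w, ¬ QFresh ws w Y → ρ ws w = Sum.inr (ws, w)) →
      transQ X' ρ = dsubst (transQ Y (fun ws w => Sum.inr (ws, w))) y ys (transQ X ρ))
    (motive_2 := fun X Y y ys X' _ => ∀ ρ, EInj ρ → ρ ys y = Sum.inr (ys, y) →
      (∀ ws w, ¬ QFresh ws w Y → ρ ws w = Sum.inr (ws, w)) →
      transA X' ρ = dsubst (transQ Y (fun ws w => Sum.inr (ws, w))) y ys (transA X ρ))
    ?_ ?_ ?_ ?_ h
  · intro Y y ys ρ hρ h1 h2
    rw [trans_var, h1]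
    unfold dsubst
    rw [if_pos rfl]
    exact trans_agree _ _ _ h2
  · intro Y y ys xs x hne ρ hρ h1 h2
    rw [trans_var]
    unfold dsubst
    rw [if_neg]
    intro h
    obtain ⟨rfl, rfl⟩ := hρ _ _ _ _ (h.trans h1.symm)
    exact hne rfl
  · intro Y y ys d inp binp inp' binp' a1 a2 a3 a4 a5 a6 ρ hρ h1 h2
    rw [trans_op, trans_op, dsubst]
    congr 1
    · funext i
      rcases hi : inp i with _ | Y
      · rw [(a1 i).1 hi]; rfl
      · rcases hi' : inp' i with _ | Y'
        · rw [(a1 i).2 hi'] at hi; cases hi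
        · exact a5 i Y Y' hi hi' ρ hρ h1 h2
    · funext i
      rcases hi : binp i with _ | Y
      · rw [(a3 i).1 hi]; rfl
      · rcases hi' : binp' i with _ | Y'
        · rw [(a3 i).2 hi'] at hi; cases hi
        · exact a6 i Y Y' hi hi' ρ hρ h1 h2
  · intro Y y ys xs x X X' hne hf _ ih ρ hρ h1 h2
    show DT.abs _ _ = DT.abs _ _
    congr 1
    apply ih _ (EInj_ext hρ xs x)
    · unfold extE
      rw [if_neg, h1]
      · rfl
      · rintro ⟨rfl, rfl⟩; exact hne rfl
    · intro ws w hw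
      unfold extE
      rw [if_neg, h2 ws w hw]
      · rfl
      · rintro ⟨rfl, rfl⟩; exact hw hf

theorem qsubst_exists (hreg : (Cardinal.mk var).IsRegular)
    {Y : QTerm var varsort index bindex opsym} (hY : QGood Y) (y : var) (ys : varsort)
    (D : DT var varsort index bindex opsym) :
    (∀ X ρ, QGood X → transQ X ρ = D → ∃ X' X'', transQ X' ρ = D ∧ QSubst X' Y y ys X'') ∧
    (∀ X ρ, QGoodAbs X → transA X ρ = D → ∃ X' X'', transA X' ρ = D ∧ QSubstAbs X' Y y ys X'') := by
  induction D with
  | bot =>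
    exact ⟨fun X _ _ h => absurd h (trans_ne_bot _ _),
      fun X _ _ h => absurd h (transA_ne_bot _ _)⟩
  | v s =>
    constructor
    · rintro (⟨xs, x⟩ | ⟨d, inp, binp⟩) ρ - h
      · by_cases hc : (xs, x) = (ys, y)
        · cases hc
          exact ⟨_, _, h, .var_eq⟩
        · exact ⟨_, _, h, .var_ne hc⟩
      · rw [trans_op] at h; cases h
    · rintro ⟨xs, x, X⟩ ρ - h
      cases h
  | abs zs D ih =>
    constructor
    · rintro (⟨xs, x⟩ | ⟨d, inp, binp⟩) ρ - h
      · cases h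
      · rw [trans_op] at h; cases h
    · rintro ⟨xs, x, X⟩ ρ hg h
      obtain ⟨rfl, k⟩ := DT.abs.inj h
      cases hg with
      | qAbs hg =>
      obtain ⟨v, h1, h2, h3, h4⟩ := exists_fresh2 hreg xs hg hY x y
      rw [← trans_swap_fresh x h3] at k
      obtain ⟨X', X'', e1, e2⟩ := ih.1 _ _ (by
        rw [← good_iff _ (extE ρ xs v), trans_swap_fresh x h3, good_iff]; exact hg) k
      refine ⟨.qAbs xs v X', .qAbs xs v X'', ?_, .abs ?_ h4 e2⟩
      · show DT.abs _ _ = _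
        rw [e1]
      · intro hc
        exact h2 (Prod.ext_iff.1 hc).2
  | op e f g ihf ihg =>
    constructor
    · rintro (⟨xs, x⟩ | ⟨d, inp, binp⟩) ρ hg h
      · cases h
      · rw [trans_op] at h
        obtain ⟨rfl, h1, h2⟩ := DT.op.inj h
        cases hg with
        | qOp a b _ _ =>
        have k1 : ∀ i, ∃ o o' : Option (QTerm var varsort index bindex opsym),
            optD (fun X => transQ X ρ) o = f i ∧ (o = none ↔ o' = none) ∧
            ∀ X X', o = some X → o' = some X' → QSubst X Y y ys X' := by
          intro i
          have e1 := congrFun h1 i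
          beta_reduce at e1
          rcases hi : inp i with _ | X
          · rw [hi] at e1
            exact ⟨none, none, e1, by simp, by simp⟩
          · rw [hi] at e1
            obtain ⟨X', X'', c1, c2⟩ := (ihf i).1 X ρ (a i X hi) e1
            refine ⟨some X', some X'', c1, by simp, ?_⟩
            rintro _ _ ⟨⟩ ⟨⟩
            exact c2
        have k2 : ∀ i, ∃ o o' : Option (QAbs var varsort index bindex opsym),
            optD (fun X => transA X ρ) o = g i ∧ (o = none ↔ o' = none) ∧
            ∀ X X', o = some X → o' = some X' → QSubstAbs X Y y ys X' := by
          intro i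
          have e1 := congrFun h2 i
          beta_reduce at e1
          rcases hi : binp i with _ | X
          · rw [hi] at e1
            exact ⟨none, none, e1, by simp, by simp⟩
          · rw [hi] at e1
            obtain ⟨X', X'', c1, c2⟩ := (ihg i).2 X ρ (b i X hi) e1
            refine ⟨some X', some X'', c1, by simp, ?_⟩
            rintro _ _ ⟨⟩ ⟨⟩
            exact c2
        choose o o' p1 p2 p3 using k1
        choose q q' r1 r2 r3 using k2
        refine ⟨.qOp d o q, .qOp d o' q', ?_, .op p2 p3 r2 r3⟩
        rw [trans_op]
        congr 1
        · exact funext p1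
        · exact funext r1
    · rintro ⟨xs, x, X⟩ ρ - h
      cases h

theorem dsubst_good {E D : DT var varsort index bindex opsym} {y : var} {ys : varsort}
    (hE : DGood E) (hD : DGood D) : DGood (dsubst E y ys D) := by
  induction D with
  | bot => trivial
  | v s =>
    unfold dsubst
    split_ifs
    · exact hE
    · trivial
  | abs xs D ih => exact ih hD
  | op d f g ihf ihg =>
    obtain ⟨a, b, c, e⟩ := hD
    refine ⟨fun i => ihf i (a i), fun i => ihg i (b i),
      lt_of_le_of_lt (Cardinal.mk_le_mk_of_subset ?_) c,
      lt_of_le_of_lt (Cardinal.mk_le_mk_of_subset ?_) e⟩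
    · intro i hi hc
      apply hi
      beta_reduce
      rw [hc]; rfl
    · intro i hi hc
      apply hi
      beta_reduce
      rw [hc]; rfl

/-- The initial environment. -/
def env0 : varsort → var → ℕ ⊕ (varsort × var) := fun ws w => Sum.inr (ws, w)

theorem EInj_env0 : EInj (env0 : varsort → var → ℕ ⊕ (varsort × var)) := by
  intro xs x ys y h
  have := Sum.inr.inj h
  exact Prod.ext_iff.1 this

theorem dsubst_fresh (E : DT var varsort index bindex opsym) (y : var) (ys : varsort)
    (X : QTerm var varsort index bindex opsym) :
    ∀ ρ, (∀ ws w, ¬ QFresh ws w X → ρ ws w ≠ Sum.inr (ys, y)) →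
      dsubst E y ys (transQ X ρ) = transQ X ρ := by
  refine q_ind (P := fun X => ∀ ρ, (∀ ws w, ¬ QFresh ws w X → ρ ws w ≠ Sum.inr (ys, y)) →
      dsubst E y ys (transQ X ρ) = transQ X ρ)
    (Q := fun X => ∀ ρ, (∀ ws w, ¬ QFreshAbs ws w X → ρ ws w ≠ Sum.inr (ys, y)) →
      dsubst E y ys (transA X ρ) = transA X ρ) ?_ ?_ ?_ X
  · intro xs x ρ hρ
    rw [trans_var]
    unfold dsubst
    rw [if_neg (hρ _ _ not_fresh_var)]
  · intro d inp binp h1 h2 ρ hρ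
    rw [trans_op, dsubst]
    congr 1
    · funext i
      rcases hi : inp i with _ | Y
      · rfl
      · exact h1 i Y hi ρ fun ws w hw => hρ ws w (not_fresh_op_inp hi hw)
    · funext i
      rcases hi : binp i with _ | Y
      · rfl
      · exact h2 i Y hi ρ fun ws w hw => hρ ws w (not_fresh_op_binp hi hw)
  · intro xs x X ih ρ hρ
    show DT.abs _ _ = DT.abs _ _
    congr 1
    apply ih
    intro ws w hw
    unfold extE
    split_ifs with hc
    · simp
    · have h := hρ ws w (not_fresh_abs hc hw)
      rcases hs : ρ ws w with n | p
      · simp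
      · rw [hs] at h
        exact h

theorem dsubst_dsubst {EY EZ : DT var varsort index bindex opsym} {y z : var} {ys zs : varsort}
    (hne : ys ≠ zs ∨ y ≠ z) (hf : ∀ E, dsubst E y ys EZ = EZ)
    (D : DT var varsort index bindex opsym) :
    dsubst EZ z zs (dsubst EY y ys D) =
      dsubst (dsubst EZ z zs EY) y ys (dsubst EZ z zs D) := by
  induction D with
  | bot => rfl
  | v s =>
    by_cases h1 : s = Sum.inr (ys, y)
    · have h2 : (Sum.inr (ys, y) : ℕ ⊕ (varsort × var)) ≠ Sum.inr (zs, z) := by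
        intro h
        have := Prod.ext_iff.1 (Sum.inr.inj h)
        rcases hne with hne | hne
        · exact hne this.1
        · exact hne this.2
      subst h1
      simp [dsubst, h2]
    · by_cases h2 : s = Sum.inr (zs, z)
      · simp only [dsubst, if_neg h1, if_pos h2, hf]
      · simp only [dsubst, if_neg h1, if_neg h2]
  | abs xs D ih => simp only [dsubst, ih]
  | op d f g ihf ihg => simp only [dsubst, ihf, ihg]

/-- The tree of a term. -/
noncomputable def tD (X : Term var varsort index bindex opsym) :
    DT var varsort index bindex opsym :=
  Quot.lift (fun X => transQ X env0) (fun _ _ h => alpha_trans h env0) X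

theorem tD_tmk (X : QTerm var varsort index bindex opsym) : tD (tmk X) = transQ X env0 := rfl

theorem tmk_trep (X : Term var varsort index bindex opsym) : tmk (trep X) = X := Quot.out_eq X

theorem tD_trep (X : Term var varsort index bindex opsym) : transQ (trep X) env0 = tD X := by
  rw [← tD_tmk, tmk_trep]

theorem good_tD (X : Term var varsort index bindex opsym) : good X ↔ DGood (tD X) := by
  rw [← tD_trep, good_iff]; rfl

theorem tD_inj (hreg : (Cardinal.mk var).IsRegular)
    {X Y : Term var varsort index bindex opsym} (hX : good X) (h : tD X = tD Y) : X = Y := by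
  have hY : good Y := by rwa [good_tD, ← h, ← good_tD]
  rw [← tmk_trep X, ← tmk_trep Y]
  exact Quot.sound ((complete hreg (tD X)).1 _ _ env0 EInj_env0 hX hY (tD_trep X)
    ((tD_trep Y).trans h.symm))

theorem tD_subst (hreg : (Cardinal.mk var).IsRegular)
    {X Y : Term var varsort index bindex opsym} (hX : good X) (hY : good Y) (y : var)
    (ys : varsort) : tD (subst X Y y ys) = dsubst (tD Y) y ys (tD X) := by
  have hex : ∃ Z, SubstRel X Y y ys Z := by
    obtain ⟨X', X'', h1, h2⟩ := (qsubst_exists hreg hY y ys (tD X)).1 _ env0 hX (tD_trep X)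
    exact ⟨tmk X'', X', X'', (tD_inj (Y := tmk X') hreg hX h1.symm).symm, rfl, h2⟩
  unfold subst
  rw [dif_pos hex]
  obtain ⟨qX, qZ, h1, h2, h3⟩ := hex.choose_spec
  rw [← h2, ← h1, tD_tmk, tD_tmk, ← tD_trep Y]
  exact qsubst_trans h3 env0 EInj_env0 rfl fun _ _ _ => rfl

theorem good_subst (hreg : (Cardinal.mk var).IsRegular)
    {X Y : Term var varsort index bindex opsym} (hX : good X) (hY : good Y) (y : var)
    (ys : varsort) : good (subst X Y y ys) := by
  rw [good_tD, tD_subst hreg hX hY]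
  exact dsubst_good ((good_tD Y).1 hY) ((good_tD X).1 hX)

/-- substitution of different variables distributes over itself,
assuming freshness. -/
theorem subst_subst_different (hinf : Cardinal.aleph0 ≤ Cardinal.mk var)
    (hreg : (Cardinal.mk var).IsRegular)
    (X Y Z : Term var varsort index bindex opsym) (hX : good X) (hY : good Y) (hZ : good Z)
    (y z : var) (ys zs : varsort)
    (hne : ys ≠ zs ∨ y ≠ z) (hfr : fresh ys y Z) :
    subst (subst X Y y ys) Z z zs =
      subst (subst X Z z zs) (subst Y Z z zs) y ys := by
  have hXY := good_subst hreg hX hY y ys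
  have hXZ := good_subst hreg hX hZ z zs
  have hYZ := good_subst hreg hY hZ z zs
  apply tD_inj hreg (good_subst hreg hXY hZ z zs)
  rw [tD_subst hreg hXY hZ, tD_subst hreg hX hY, tD_subst hreg hXZ hYZ, tD_subst hreg hX hZ,
    tD_subst hreg hY hZ]
  apply dsubst_dsubst hne
  intro E
  rw [← tD_trep Z]
  apply dsubst_fresh
  intro ws w hw h
  obtain ⟨rfl, rfl⟩ := Prod.ext_iff.1 (Sum.inr.inj h)
  exact hw hfr

end Binding
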